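/- Let N ≥ 1 and let θ1, θ2, θ3 be real numbers that are pairwise distinct modulo 2π. Then J(iθ1,iθ2;−iθ3) + J(iθ1,iθ3;−iθ2) + J(iθ2,iθ3;−iθ1) + J(−iθ1,−iθ2;iθ3) + J(−iθ1,−iθ3;iθ2) + J(−iθ2,−iθ3;iθ1) + N( J(−iθ1;iθ3) + J(−iθ2;iθ3) + J(−iθ1;iθ2) + J(−iθ3;iθ2) + J(−iθ2;iθ1) + J(−iθ3;iθ1) ) + N^3 = det_{3×3} ( S_N(θ_k − θ_j) )_{1≤j,k≤3}, where S_N(θ) := sin(Nθ/2)/sin(θ/2) (with S_N(0) := N); in particular the left-hand side extends to an entire function of (θ1,θ2,θ3). -/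

import Mathlib

open Complex Real

noncomputable section

open scoped Classical

/-- `z(x) = 1/(1 − e^{−x})`. -/
def zf (x : ℂ) : ℂ := (1 - Complex.exp (-x))⁻¹

/-- The logarithmic derivative `z'/z`. -/
def zl (x : ℂ) : ℂ := deriv zf x / zf x

/-- `J(α;β) = (z'/z)'(α+β) + e^{−N(α+β)} z(α+β) z(−α−β)`. -/
def Jb (N : ℕ) (α β : ℂ) : ℂ :=
  deriv zl (α + β) + Complex.exp (-(N : ℂ) * (α + β)) * zf (α + β) * zf (-α - β)

/-- `J(α1,α2;β)`, the three-variable closed-form expression. -/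
def Ja (N : ℕ) (α1 α2 β : ℂ) : ℂ :=
  Complex.exp (-(N : ℂ) * (α1 + β)) * zf (α1 + β) * zf (-α1 - β) *
      (zl (α2 - α1) - zl (α2 + β)) +
    Complex.exp (-(N : ℂ) * (α2 + β)) * zf (α2 + β) * zf (-α2 - β) *
      (zl (α1 - α2) - zl (α1 + β))

/-- The sum of all the `J`-terms appearing in the triple correlation formula for `U(N)`,
as a function of complex angles `θ1, θ2, θ3`. -/
def Jsum (N : ℕ) (θ1 θ2 θ3 : ℂ) : ℂ :=
  Ja N (Complex.I * θ1) (Complex.I * θ2) (-(Complex.I * θ3)) +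
    Ja N (Complex.I * θ1) (Complex.I * θ3) (-(Complex.I * θ2)) +
    Ja N (Complex.I * θ2) (Complex.I * θ3) (-(Complex.I * θ1)) +
    Ja N (-(Complex.I * θ1)) (-(Complex.I * θ2)) (Complex.I * θ3) +
    Ja N (-(Complex.I * θ1)) (-(Complex.I * θ3)) (Complex.I * θ2) +
    Ja N (-(Complex.I * θ2)) (-(Complex.I * θ3)) (Complex.I * θ1) +
    (N : ℂ) * (Jb N (-(Complex.I * θ1)) (Complex.I * θ3) +
      Jb N (-(Complex.I * θ2)) (Complex.I * θ3) +
      Jb N (-(Complex.I * θ1)) (Complex.I * θ2) +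
      Jb N (-(Complex.I * θ3)) (Complex.I * θ2) +
      Jb N (-(Complex.I * θ2)) (Complex.I * θ1) +
      Jb N (-(Complex.I * θ3)) (Complex.I * θ1)) +
    (N : ℂ) ^ 3

/-- The sine kernel `S_N(θ) = sin(Nθ/2)/sin(θ/2)`, with `S_N(0) := N`. -/
def SN (N : ℕ) (x : ℝ) : ℝ :=
  if Real.sin (x / 2) = 0 then (N : ℝ) else Real.sin (N * x / 2) / Real.sin (x / 2)

/-!
The function `z` satisfies `z'/z (x) = z (-x)`, and `z (x) z (-x) = -1 / (4 sinh² (x/2))`, so the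
`J`-terms are elementary: with `x = α₁ + β` and `y = α₂ + β`, the addition theorem for `coth` gives
`J(α₁,α₂;β) = (e^{-Ny} - e^{-Nx}) / (8 sinh (x/2) sinh (y/2) sinh ((x - y)/2))`, while
`J(α;β) = (1 - e^{-N(α+β)}) / (4 sinh² ((α + β)/2))`. Pairing each term with the one at negated
arguments turns the two-variable terms into `-S_N²`, and the three-variable terms into fractions
with the same denominator up to sign, whose sum is `2 S_N S_N S_N` because
`sin 2a + sin 2b - sin 2(a + b) = 4 sin a sin b sin (a + b)`. These are the terms in the expansion
of the determinant of a symmetric `3 × 3` matrix with constant diagonal `N`.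
-/

lemma sinh_neg_div_two (x : ℂ) : Complex.sinh (-x / 2) = -Complex.sinh (x / 2) := by
  rw [neg_div, Complex.sinh_neg]

lemma zf_eq_exp_div_sinh (x : ℂ) : zf x = Complex.exp (x / 2) / (2 * Complex.sinh (x / 2)) := by
  have one_sub_exp_neg : 1 - Complex.exp (-x) =
      Complex.exp (-(x / 2)) * (2 * Complex.sinh (x / 2)) := by
    rw [Complex.two_sinh, mul_sub, ← Complex.exp_add, ← Complex.exp_add, neg_add_cancel,
      Complex.exp_zero, ← neg_add, add_halves]
  rw [zf, one_sub_exp_neg, mul_inv, ← Complex.exp_neg, neg_neg, ← div_eq_mul_inv]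

lemma zf_ne_zero {x : ℂ} (hx : Complex.sinh (x / 2) ≠ 0) : zf x ≠ 0 := by
  rw [zf_eq_exp_div_sinh]
  exact div_ne_zero (Complex.exp_ne_zero _) (mul_ne_zero two_ne_zero hx)

lemma zf_neg (x : ℂ) : zf (-x) = -Complex.exp (-(x / 2)) / (2 * Complex.sinh (x / 2)) := by
  rw [zf_eq_exp_div_sinh, sinh_neg_div_two, neg_div, mul_neg, div_neg, neg_div]

lemma zf_mul_zf_neg (x : ℂ) : zf x * zf (-x) = -1 / (4 * Complex.sinh (x / 2) ^ 2) := by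
  rw [zf_eq_exp_div_sinh, zf_neg, div_mul_div_comm, mul_neg, ← Complex.exp_add, add_neg_cancel,
    Complex.exp_zero]
  ring

lemma zl_eq_zf_neg (x : ℂ) : zl x = zf (-x) := by
  have deriv_one_sub_exp_neg : deriv (fun y => 1 - Complex.exp (-y)) x = Complex.exp (-x) := by
    simpa using (((hasDerivAt_neg x).cexp).const_sub 1).deriv
  have logDeriv_zf : zl x = -(Complex.exp (-x) / (1 - Complex.exp (-x))) := by
    have := logDeriv_fun_zpow (f := fun y => 1 - Complex.exp (-y)) (x := x) (by fun_prop) (-1)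
    simp only [zpow_neg_one] at this
    rwa [logDeriv_apply, logDeriv_apply, deriv_one_sub_exp_neg, Int.cast_neg, Int.cast_one,
      neg_one_mul] at this
  rw [logDeriv_zf, zf, neg_neg, ← inv_div, ← inv_neg, sub_div, div_self (Complex.exp_ne_zero _),
    one_div, ← Complex.exp_neg, neg_neg, neg_sub]

lemma deriv_zf {x : ℂ} (hx : Complex.sinh (x / 2) ≠ 0) : deriv zf x = zf x * zf (-x) := by
  rw [← zl_eq_zf_neg, zl, mul_div_cancel₀ _ (zf_ne_zero hx)]

lemma deriv_zl {x : ℂ} (hx : Complex.sinh (x / 2) ≠ 0) : deriv zl x = -(zf x * zf (-x)) := by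
  have sinh_neg_ne_zero : Complex.sinh (-x / 2) ≠ 0 := by
    rwa [sinh_neg_div_two, neg_ne_zero]
  rw [funext zl_eq_zf_neg, deriv_comp_neg, deriv_zf sinh_neg_ne_zero, neg_neg, mul_comm]

lemma zl_sub_sub_zl {x y : ℂ} (hy : Complex.sinh (y / 2) ≠ 0)
    (hxy : Complex.sinh ((x - y) / 2) ≠ 0) :
    zl (y - x) - zl y =
      Complex.sinh (x / 2) / (2 * Complex.sinh (y / 2) * Complex.sinh ((x - y) / 2)) := by
  have sinh_sub : Complex.exp ((x - y) / 2) * Complex.sinh (y / 2) +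
      Complex.exp (-(y / 2)) * Complex.sinh ((x - y) / 2) = Complex.sinh (x / 2) := by
    rw [Complex.sinh, Complex.sinh, Complex.sinh, mul_div_assoc', mul_div_assoc', ← add_div,
      mul_sub, mul_sub]
    simp only [← Complex.exp_add]
    ring_nf
  rw [zl_eq_zf_neg, zl_eq_zf_neg, neg_sub, zf_eq_exp_div_sinh, zf_neg, ← sinh_sub]
  field_simp
  ring

lemma Jb_eq_div_sinh (N : ℕ) {α β : ℂ} (h : Complex.sinh ((α + β) / 2) ≠ 0) :
    Jb N α β = (1 - Complex.exp (-N * (α + β))) / (4 * Complex.sinh ((α + β) / 2) ^ 2) := by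
  rw [Jb, deriv_zl h, ← neg_add', mul_assoc, zf_mul_zf_neg]
  ring

lemma Ja_eq_div_sinh (N : ℕ) {α₁ α₂ β : ℂ} (h₁ : Complex.sinh ((α₁ + β) / 2) ≠ 0)
    (h₂ : Complex.sinh ((α₂ + β) / 2) ≠ 0) (h₁₂ : Complex.sinh ((α₁ - α₂) / 2) ≠ 0) :
    Ja N α₁ α₂ β = (Complex.exp (-N * (α₂ + β)) - Complex.exp (-N * (α₁ + β))) /
      (8 * Complex.sinh ((α₁ + β) / 2) * Complex.sinh ((α₂ + β) / 2) *
        Complex.sinh ((α₁ - α₂) / 2)) := by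
  have zl_diff₁ := zl_sub_sub_zl (x := α₁ + β) h₂ (by rwa [add_sub_add_right_eq_sub])
  have zl_diff₂ := zl_sub_sub_zl (x := α₂ + β) h₁
    (by rwa [add_sub_add_right_eq_sub, ← neg_sub, sinh_neg_div_two, neg_ne_zero])
  rw [add_sub_add_right_eq_sub, add_sub_add_right_eq_sub] at zl_diff₁ zl_diff₂
  rw [← neg_sub α₁ α₂, sinh_neg_div_two] at zl_diff₂
  rw [Ja, ← neg_add', ← neg_add', mul_assoc _ (zf (α₁ + β)) (zf _),
    mul_assoc _ (zf (α₂ + β)) (zf _), zf_mul_zf_neg, zf_mul_zf_neg, zl_diff₁, zl_diff₂]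
  field_simp
  ring

lemma Jb_add_Jb_neg_swap (N : ℕ) {α β : ℂ} (h : Complex.sinh ((α + β) / 2) ≠ 0) :
    Jb N α β + Jb N (-β) (-α) =
      -(Complex.sinh (N * ((α + β) / 2)) / Complex.sinh ((α + β) / 2)) ^ 2 := by
  have sum_neg : -β + -α = -(α + β) := by ring
  have sinh_neg_ne_zero : Complex.sinh ((-β + -α) / 2) ≠ 0 := by
    rwa [sum_neg, sinh_neg_div_two, neg_ne_zero]
  have exp_add_exp_neg : Complex.exp (N * (α + β)) + Complex.exp (-N * (α + β)) =
      2 + 4 * Complex.sinh (N * ((α + β) / 2)) ^ 2 := by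
    rw [neg_mul, ← Complex.two_cosh, show (N : ℂ) * (α + β) = 2 * (N * ((α + β) / 2)) by ring,
      Complex.cosh_two_mul, Complex.cosh_sq]
    ring
  rw [Jb_eq_div_sinh N h, Jb_eq_div_sinh N sinh_neg_ne_zero, sum_neg, sinh_neg_div_two, neg_sq,
    neg_mul_neg]
  linear_combination -exp_add_exp_neg / (4 * Complex.sinh ((α + β) / 2) ^ 2)

lemma Ja_add_Ja_neg (N : ℕ) {α₁ α₂ β : ℂ} (h₁ : Complex.sinh ((α₁ + β) / 2) ≠ 0)
    (h₂ : Complex.sinh ((α₂ + β) / 2) ≠ 0) (h₁₂ : Complex.sinh ((α₁ - α₂) / 2) ≠ 0) :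
    Ja N α₁ α₂ β + Ja N (-α₁) (-α₂) (-β) =
      (Complex.sinh (N * (α₁ + β)) - Complex.sinh (N * (α₂ + β))) /
        (4 * Complex.sinh ((α₁ + β) / 2) * Complex.sinh ((α₂ + β) / 2) *
          Complex.sinh ((α₁ - α₂) / 2)) := by
  have Ja_neg := Ja_eq_div_sinh N (α₁ := -α₁) (α₂ := -α₂) (β := -β)
  rw [← neg_add, ← neg_add, neg_sub_neg, ← neg_sub α₁, sinh_neg_div_two, sinh_neg_div_two,
    sinh_neg_div_two, neg_mul_neg, neg_mul_neg] at Ja_neg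
  rw [Ja_eq_div_sinh N h₁ h₂ h₁₂, Ja_neg (neg_ne_zero.mpr h₁) (neg_ne_zero.mpr h₂)
    (neg_ne_zero.mpr h₁₂), neg_mul, neg_mul]
  linear_combination (Complex.two_sinh (N * (α₂ + β)) - Complex.two_sinh (N * (α₁ + β))) /
    (8 * Complex.sinh ((α₁ + β) / 2) * Complex.sinh ((α₂ + β) / 2) *
      Complex.sinh ((α₁ - α₂) / 2))

/-- The entire function extending `sin (N x / 2) / sin (x / 2)`, i.e. the sine kernel of `U(N)` at
complex argument, written as `U_{N-1} (cos (x / 2))`. At nonzero multiples of `2π` it is `±N`,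
whereas `SN` is `N` there. -/
def sineKernel (N : ℕ) (x : ℂ) : ℂ :=
  (Polynomial.Chebyshev.U ℂ (N - 1)).eval (Complex.cos (x / 2))

lemma sineKernel_mul_sin (N : ℕ) (x : ℂ) :
    sineKernel N x * Complex.sin (x / 2) = Complex.sin (N * x / 2) := by
  rw [sineKernel, Polynomial.Chebyshev.U_complex_cos, mul_div_assoc]
  push_cast
  rw [sub_add_cancel]

lemma sineKernel_zero (N : ℕ) : sineKernel N 0 = N := by
  simp [sineKernel]

lemma sineKernel_neg (N : ℕ) (x : ℂ) : sineKernel N (-x) = sineKernel N x := by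
  rw [sineKernel, neg_div, Complex.cos_neg, sineKernel]

@[fun_prop]
lemma differentiable_sineKernel (N : ℕ) : Differentiable ℂ (sineKernel N) :=
  (Polynomial.differentiable (𝕜 := ℂ) _).comp (f := fun x : ℂ => Complex.cos (x / 2)) (by fun_prop)

lemma sin_half_ne_zero {x : ℂ} (hx : ∀ m : ℤ, x ≠ 2 * π * m) : Complex.sin (x / 2) ≠ 0 :=
  Complex.sin_ne_zero_iff.mpr fun m h => hx m (by linear_combination 2 * h)

lemma SN_zero (N : ℕ) : SN N 0 = N := by
  simp [SN]

lemma SN_neg (N : ℕ) (x : ℝ) : SN N (-x) = SN N x := by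
  simp only [SN, mul_neg, neg_div (2 : ℝ), Real.sin_neg, neg_eq_zero, neg_div_neg_eq]

lemma ofReal_SN (N : ℕ) {x : ℝ} (hx : ∀ m : ℤ, x ≠ 2 * π * m) :
    (SN N x : ℂ) = sineKernel N x := by
  have sin_ne_zero : Complex.sin (x / 2) ≠ 0 := sin_half_ne_zero (mod_cast hx)
  rw [SN, if_neg (mod_cast sin_ne_zero)]
  push_cast
  rw [← sineKernel_mul_sin, mul_div_cancel_right₀ _ sin_ne_zero]

lemma det_fin_three_of_even {G R : Type*} [AddCommGroup G] [CommRing R] {f : G → R}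
    (hf : ∀ x, f (-x) = f x) (a b c : G) :
    (Matrix.of fun j k : Fin 3 => f (![a, b, c] k - ![a, b, c] j)).det =
      f 0 ^ 3 - f 0 * (f (a - b) ^ 2 + f (b - c) ^ 2 + f (a - c) ^ 2) +
        2 * (f (a - b) * f (b - c) * f (a - c)) := by
  rw [Matrix.det_fin_three]
  simp only [Matrix.of_apply, Matrix.cons_val, sub_self]
  rw [← neg_sub a b, ← neg_sub b c, ← neg_sub a c, hf, hf, hf]
  ring

lemma ofReal_det_SN (N : ℕ) {t₁ t₂ t₃ : ℝ} (h₁₂ : ∀ m : ℤ, t₁ - t₂ ≠ 2 * π * m)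
    (h₁₃ : ∀ m : ℤ, t₁ - t₃ ≠ 2 * π * m) (h₂₃ : ∀ m : ℤ, t₂ - t₃ ≠ 2 * π * m) :
    (((Matrix.of fun j k : Fin 3 => SN N (![t₁, t₂, t₃] k - ![t₁, t₂, t₃] j)).det : ℝ) : ℂ) =
      (Matrix.of fun j k : Fin 3 =>
        sineKernel N (![(t₁ : ℂ), t₂, t₃] k - ![(t₁ : ℂ), t₂, t₃] j)).det := by
  rw [det_fin_three_of_even (SN_neg N), det_fin_three_of_even (sineKernel_neg N), SN_zero,
    sineKernel_zero]
  push_cast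
  simp only [ofReal_SN N h₁₂, ofReal_SN N h₁₃, ofReal_SN N h₂₃, Complex.ofReal_sub]

lemma sinh_I_mul_half (x : ℂ) : Complex.sinh (I * x / 2) = Complex.sin (x / 2) * I := by
  rw [← Complex.sinh_mul_I, mul_div_assoc, mul_comm]

lemma Jb_add_Jb_swap (N : ℕ) {s t : ℂ} (hst : Complex.sin ((s - t) / 2) ≠ 0) :
    Jb N (-(I * s)) (I * t) + Jb N (-(I * t)) (I * s) = -sineKernel N (s - t) ^ 2 := by
  have sinh_half : Complex.sinh ((-(I * t) + I * s) / 2) = Complex.sin ((s - t) / 2) * I := by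
    rw [← sinh_I_mul_half]; ring_nf
  have sinh_N_half :
      Complex.sinh (N * ((-(I * t) + I * s) / 2)) = Complex.sin (N * (s - t) / 2) * I := by
    rw [mul_sub, ← sinh_I_mul_half]; ring_nf
  have Jb_pair := Jb_add_Jb_neg_swap N (α := -(I * t)) (β := I * s)
    (by rw [sinh_half]; exact mul_ne_zero hst I_ne_zero)
  rw [neg_neg, sinh_half, sinh_N_half, mul_div_mul_right _ _ I_ne_zero, ← sineKernel_mul_sin,
    mul_div_cancel_right₀ _ hst] at Jb_pair
  rw [add_comm, Jb_pair]

lemma Ja_add_Ja_neg_I_mul (N : ℕ) {s t r : ℂ} (hsr : Complex.sin ((s - r) / 2) ≠ 0)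
    (htr : Complex.sin ((t - r) / 2) ≠ 0) (hst : Complex.sin ((s - t) / 2) ≠ 0) :
    Ja N (I * s) (I * t) (-(I * r)) + Ja N (-(I * s)) (-(I * t)) (I * r) =
      (Complex.sin (N * (t - r)) - Complex.sin (N * (s - r))) /
        (4 * Complex.sin ((s - r) / 2) * Complex.sin ((t - r) / 2) *
          Complex.sin ((s - t) / 2)) := by
  have sinh_N_mul (x : ℂ) : Complex.sinh (N * (I * x)) = Complex.sin (N * x) * I := by
    rw [mul_left_comm, mul_comm, Complex.sinh_mul_I]
  have Ja_pair := Ja_add_Ja_neg N (α₁ := I * s) (α₂ := I * t) (β := -(I * r))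
  simp only [← sub_eq_add_neg, ← mul_sub, sinh_I_mul_half, sinh_N_mul, neg_neg] at Ja_pair
  rw [Ja_pair (mul_ne_zero hsr I_ne_zero) (mul_ne_zero htr I_ne_zero) (mul_ne_zero hst I_ne_zero)]
  field_simp
  rw [I_sq]
  ring

lemma sin_two_mul_add_sin_two_mul_sub (a b : ℂ) :
    Complex.sin (2 * a) + Complex.sin (2 * b) - Complex.sin (2 * (a + b)) =
      4 * (Complex.sin a * Complex.sin b * Complex.sin (a + b)) := by
  rw [mul_add, Complex.sin_add (2 * a), Complex.sin_add a]
  simp only [Complex.sin_two_mul, Complex.cos_two_mul']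
  linear_combination -2 * Complex.sin a * Complex.cos a * Complex.sin_sq_add_cos_sq b -
    2 * Complex.sin b * Complex.cos b * Complex.sin_sq_add_cos_sq a

lemma sum_Ja_eq (N : ℕ) {t₁ t₂ t₃ : ℂ} (h₁₂ : Complex.sin ((t₁ - t₂) / 2) ≠ 0)
    (h₁₃ : Complex.sin ((t₁ - t₃) / 2) ≠ 0) (h₂₃ : Complex.sin ((t₂ - t₃) / 2) ≠ 0) :
    Ja N (I * t₁) (I * t₂) (-(I * t₃)) + Ja N (I * t₁) (I * t₃) (-(I * t₂)) +
      Ja N (I * t₂) (I * t₃) (-(I * t₁)) + Ja N (-(I * t₁)) (-(I * t₂)) (I * t₃) +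
      Ja N (-(I * t₁)) (-(I * t₃)) (I * t₂) + Ja N (-(I * t₂)) (-(I * t₃)) (I * t₁) =
      2 * (sineKernel N (t₁ - t₂) * sineKernel N (t₂ - t₃) * sineKernel N (t₁ - t₃)) := by
  have sin_half_swap (x y : ℂ) : Complex.sin ((y - x) / 2) = -Complex.sin ((x - y) / 2) := by
    rw [← Complex.sin_neg, ← neg_div, neg_sub]
  have sin_N_swap (x y : ℂ) : Complex.sin (N * (y - x)) = -Complex.sin (N * (x - y)) := by
    rw [← Complex.sin_neg, ← mul_neg, neg_sub]
  have pair₁₂ := Ja_add_Ja_neg_I_mul N h₁₃ h₂₃ h₁₂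
  have pair₁₃ := Ja_add_Ja_neg_I_mul N (s := t₁) (t := t₃) (r := t₂) h₁₂
    (by rwa [sin_half_swap, neg_ne_zero]) h₁₃
  have pair₂₃ := Ja_add_Ja_neg_I_mul N (s := t₂) (t := t₃) (r := t₁)
    (by rwa [sin_half_swap, neg_ne_zero]) (by rwa [sin_half_swap, neg_ne_zero]) h₂₃
  rw [sin_half_swap t₂ t₃, sin_N_swap t₂ t₃] at pair₁₃
  rw [sin_half_swap t₁ t₂, sin_half_swap t₁ t₃, sin_N_swap t₁ t₂, sin_N_swap t₁ t₃] at pair₂₃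
  have sin_sum := sin_two_mul_add_sin_two_mul_sub (N * (t₁ - t₂) / 2) (N * (t₂ - t₃) / 2)
  rw [← add_div, ← mul_add, sub_add_sub_cancel, mul_div_cancel₀ _ two_ne_zero,
    mul_div_cancel₀ _ two_ne_zero, mul_div_cancel₀ _ two_ne_zero, ← sineKernel_mul_sin,
    ← sineKernel_mul_sin, ← sineKernel_mul_sin] at sin_sum
  calc
    _ = (Complex.sin (N * (t₁ - t₂)) + Complex.sin (N * (t₂ - t₃)) -
          Complex.sin (N * (t₁ - t₃))) /
        (2 * (Complex.sin ((t₁ - t₂) / 2) * Complex.sin ((t₂ - t₃) / 2) *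
          Complex.sin ((t₁ - t₃) / 2))) := by
      linear_combination pair₁₂ + pair₁₃ + pair₂₃
    _ = _ := by
      rw [sin_sum]
      field_simp
      ring

lemma Jsum_eq_det_sineKernel (N : ℕ) {t₁ t₂ t₃ : ℂ} (h₁₂ : ∀ m : ℤ, t₁ - t₂ ≠ 2 * π * m)
    (h₁₃ : ∀ m : ℤ, t₁ - t₃ ≠ 2 * π * m) (h₂₃ : ∀ m : ℤ, t₂ - t₃ ≠ 2 * π * m) :
    Jsum N t₁ t₂ t₃ = (Matrix.of fun j k : Fin 3 =>
      sineKernel N (![t₁, t₂, t₃] k - ![t₁, t₂, t₃] j)).det := by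
  have sin₁₂ := sin_half_ne_zero h₁₂
  have sin₁₃ := sin_half_ne_zero h₁₃
  have sin₂₃ := sin_half_ne_zero h₂₃
  rw [det_fin_three_of_even (sineKernel_neg N), sineKernel_zero, Jsum,
    sum_Ja_eq N sin₁₂ sin₁₃ sin₂₃]
  linear_combination
    N * (Jb_add_Jb_swap N sin₁₂ + Jb_add_Jb_swap N sin₂₃ + Jb_add_Jb_swap N sin₁₃)

lemma differentiable_det_sineKernel (N : ℕ) :
    Differentiable ℂ fun p : ℂ × ℂ × ℂ => (Matrix.of fun j k : Fin 3 =>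
      sineKernel N (![p.1, p.2.1, p.2.2] k - ![p.1, p.2.1, p.2.2] j)).det := by
  simp only [det_fin_three_of_even (sineKernel_neg N)]
  fun_prop

theorem stmt_17_general (N : ℕ) (t1 t2 t3 : ℂ) (h12 : ∀ m : ℤ, t1 - t2 ≠ 2 * π * m)
    (h13 : ∀ m : ℤ, t1 - t3 ≠ 2 * π * m) (h23 : ∀ m : ℤ, t2 - t3 ≠ 2 * π * m) :
    Jsum N t1 t2 t3 = (Matrix.of fun j k : Fin 3 =>
      sineKernel N (![t1, t2, t3] k - ![t1, t2, t3] j)).det ∧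
    ∃ F : ℂ × ℂ × ℂ → ℂ, Differentiable ℂ F ∧
      ∀ s1 s2 s3 : ℂ, (∀ m : ℤ, s1 - s2 ≠ 2 * π * m) →
        (∀ m : ℤ, s1 - s3 ≠ 2 * π * m) → (∀ m : ℤ, s2 - s3 ≠ 2 * π * m) →
        F (s1, s2, s3) = Jsum N s1 s2 s3 :=
  ⟨Jsum_eq_det_sineKernel N h12 h13 h23, _, differentiable_det_sineKernel N,
    fun _ _ _ h12 h13 h23 => (Jsum_eq_det_sineKernel N h12 h13 h23).symm⟩

/-- For `θ1, θ2, θ3` pairwise distinct modulo `2π`, the sum of the `J`-terms equals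
`det (S_N(θ_k − θ_j))`; in particular it extends to an entire function of `(θ1,θ2,θ3)`. -/
theorem stmt_17 (N : ℕ) (hN : 1 ≤ N) (t1 t2 t3 : ℝ)
    (h12 : ∀ m : ℤ, t1 - t2 ≠ 2 * π * m)
    (h13 : ∀ m : ℤ, t1 - t3 ≠ 2 * π * m)
    (h23 : ∀ m : ℤ, t2 - t3 ≠ 2 * π * m) :
    Jsum N t1 t2 t3 =
      ((Matrix.det (Matrix.of fun j k : Fin 3 =>
          SN N ((![t1, t2, t3] k) - (![t1, t2, t3] j))) : ℝ) : ℂ) ∧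
    ∃ F : ℂ × ℂ × ℂ → ℂ, Differentiable ℂ F ∧
      ∀ s1 s2 s3 : ℝ, (∀ m : ℤ, s1 - s2 ≠ 2 * π * m) →
        (∀ m : ℤ, s1 - s3 ≠ 2 * π * m) → (∀ m : ℤ, s2 - s3 ≠ 2 * π * m) →
        F ((s1 : ℂ), (s2 : ℂ), (s3 : ℂ)) = Jsum N s1 s2 s3 := by
  obtain ⟨eq_det, F, entire, eq_Jsum⟩ :=
    stmt_17_general N t1 t2 t3 (mod_cast h12) (mod_cast h13) (mod_cast h23)
  exact ⟨eq_det.trans (ofReal_det_SN N h12 h13 h23).symm, F, entire,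
    fun _ _ _ k12 k13 k23 => eq_Jsum _ _ _ (mod_cast k12) (mod_cast k13) (mod_cast k23)⟩

end
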